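/- There exists a constant C > 0 such that for all x, y ∈ [0,1], ∫₀^∞ ∫₀¹ (G_r(x,z) − G_r(y,z))² dz dr ≤ C |x−y|. -/

import Mathlib

/-!
The double integral can be computed exactly. Put `d n = sin (nπx) - sin (nπy)` for `n ≥ 1`. For
`r > 0` the function `z ↦ G r x z - G r y z` is the absolutely convergent sine series with
coefficients `2 e^{-π²n²r} d n`, so by Parseval (`integral_sq_sine_series`, a consequence of
`∫₀¹ sin (nπz) sin (mπz) dz = δ_{nm} / 2`) its squared `L²` norm on `[0,1]` is
`∑ 2 e^{-2π²n²r} (d n)²`. All terms are nonnegative, and integrating over `r` gives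
`∑ (d n)² / (π²n²)`.

Product-to-sum formulas express `(d n)²` through cosines, and the Fourier expansion of the second
Bernoulli polynomial, `∑ cos (2πnu) / n² = π² (u² - u + 1/6)` on `[0,1]`, evaluates the sum to
`(|x - y| - (x - y)²) / 2` (`hasSum_sq_sin_sub_sin`). Hence `C = 1/2` works.
-/

open Real MeasureTheory Set

/-- The Dirichlet heat kernel on `[0,1]`:
`G t x y = ∑_{n=1}^∞ 2 e^{−π²n²t} sin(nπx) sin(nπy)` for `t > 0`, and `0` for `t ≤ 0`. -/
noncomputable def G (t x y : ℝ) : ℝ :=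
  if 0 < t then
    ∑' n : ℕ, 2 * Real.exp (-(Real.pi ^ 2) * ((n : ℝ) + 1) ^ 2 * t)
      * Real.sin (((n : ℝ) + 1) * Real.pi * x) * Real.sin (((n : ℝ) + 1) * Real.pi * y)
  else 0

lemma integral_cos_int_mul_pi (k : ℤ) :
    ∫ z in (0 : ℝ)..1, Real.cos ((k : ℝ) * π * z) = if k = 0 then 1 else 0 := by
  split_ifs with hk
  · simp [hk]
  · have hk' : (k : ℝ) * π ≠ 0 := mul_ne_zero (by exact_mod_cast hk) Real.pi_ne_zero
    rw [intervalIntegral.integral_comp_mul_left (fun u => Real.cos u) hk', integral_cos]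
    simp [Real.sin_int_mul_pi]

lemma integral_sin_mul_sin (n m : ℕ) :
    ∫ z in Icc (0 : ℝ) 1, Real.sin (((n : ℝ) + 1) * π * z) * Real.sin (((m : ℝ) + 1) * π * z)
      = if m = n then 1 / 2 else 0 := by
  rw [integral_Icc_eq_integral_Ioc, ← intervalIntegral.integral_of_le zero_le_one]
  have h : ∀ z : ℝ, Real.sin (((n : ℝ) + 1) * π * z) * Real.sin (((m : ℝ) + 1) * π * z)
      = (Real.cos ((((n : ℤ) - m : ℤ) : ℝ) * π * z)
        - Real.cos ((((n : ℤ) + m + 2 : ℤ) : ℝ) * π * z)) / 2 := by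
    intro z
    have e1 : (((n : ℤ) - m : ℤ) : ℝ) * π * z
        = ((n : ℝ) + 1) * π * z - ((m : ℝ) + 1) * π * z := by push_cast; ring
    have e2 : (((n : ℤ) + m + 2 : ℤ) : ℝ) * π * z
        = ((n : ℝ) + 1) * π * z + ((m : ℝ) + 1) * π * z := by push_cast; ring
    rw [e1, e2, Real.cos_sub, Real.cos_add]
    ring
  simp_rw [h]
  rw [intervalIntegral.integral_div, intervalIntegral.integral_sub
    (Continuous.intervalIntegrable (by fun_prop) _ _)
    (Continuous.intervalIntegrable (by fun_prop) _ _),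
    integral_cos_int_mul_pi, integral_cos_int_mul_pi, if_neg (by omega : (n : ℤ) + m + 2 ≠ 0)]
  by_cases hmn : m = n
  · simp [hmn]
  · rw [if_neg (by omega : (n : ℤ) - m ≠ 0), if_neg hmn]
    simp

/-- Termwise integration over `[0,1]` of an absolutely convergent sine series against a continuous
weight `F`. -/
lemma hasSum_integral_sine_series {c : ℕ → ℝ} (hc : Summable fun n => |c n|) {F : ℝ → ℝ}
    (hF : Continuous F) :
    HasSum (fun n => c n * ∫ z in Icc (0 : ℝ) 1, F z * Real.sin (((n : ℝ) + 1) * π * z))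
      (∫ z in Icc (0 : ℝ) 1, F z * ∑' n, c n * Real.sin (((n : ℝ) + 1) * π * z)) := by
  have hint : ∀ n : ℕ, IntegrableOn (fun z => c n * (F z * Real.sin (((n : ℝ) + 1) * π * z)))
      (Icc (0 : ℝ) 1) := fun n =>
    (Continuous.continuousOn (by fun_prop)).integrableOn_compact isCompact_Icc
  have hFint : IntegrableOn (fun z => |F z|) (Icc (0 : ℝ) 1) :=
    (Continuous.continuousOn (by fun_prop)).integrableOn_compact isCompact_Icc
  have hsum : Summable fun n : ℕ => ∫ z in Icc (0 : ℝ) 1,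
      ‖c n * (F z * Real.sin (((n : ℝ) + 1) * π * z))‖ := by
    refine Summable.of_nonneg_of_le (fun n => integral_nonneg fun z => norm_nonneg _)
      (fun n => ?_) (hc.mul_right (∫ z in Icc (0 : ℝ) 1, |F z|))
    rw [← integral_const_mul]
    refine integral_mono (hint n).norm (hFint.const_mul _) fun z => ?_
    simp only [norm_mul, Real.norm_eq_abs]
    exact mul_le_mul_of_nonneg_left
      (mul_le_of_le_one_right (abs_nonneg _) (Real.abs_sin_le_one _)) (abs_nonneg _)
  have h := hasSum_integral_of_summable_integral_norm hint hsum
  simp_rw [integral_const_mul] at h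
  convert! h using 3 with z
  rw [← tsum_mul_left]
  exact tsum_congr fun n => by ring

/-- Parseval's identity for absolutely convergent sine series on `[0,1]`. -/
lemma integral_sq_sine_series {c : ℕ → ℝ} (hc : Summable fun n => |c n|) :
    ∫ z in Icc (0 : ℝ) 1, (∑' n, c n * Real.sin (((n : ℝ) + 1) * π * z)) ^ 2
      = ∑' n, c n ^ 2 / 2 := by
  have hF : Continuous fun z : ℝ => ∑' n, c n * Real.sin (((n : ℝ) + 1) * π * z) := by
    refine continuous_tsum (fun n => by fun_prop) hc fun n z => ?_
    rw [norm_mul, Real.norm_eq_abs, Real.norm_eq_abs]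
    exact mul_le_of_le_one_right (abs_nonneg _) (Real.abs_sin_le_one _)
  -- the `n`-th sine coefficient of the series is `c n / 2`
  have hcoef : ∀ n : ℕ, ∫ z in Icc (0 : ℝ) 1, (∑' m, c m * Real.sin (((m : ℝ) + 1) * π * z))
      * Real.sin (((n : ℝ) + 1) * π * z) = c n / 2 := by
    intro n
    have h := hasSum_integral_sine_series hc
      (F := fun z => Real.sin (((n : ℝ) + 1) * π * z)) (by fun_prop)
    simp_rw [integral_sin_mul_sin, mul_comm (Real.sin (((n : ℝ) + 1) * π * _))] at h
    rw [← h.tsum_eq, tsum_eq_single n (fun m hm => by simp [hm])]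
    simp [div_eq_mul_inv]
  have h := hasSum_integral_sine_series hc hF
  simp_rw [hcoef] at h
  simp_rw [sq]
  rw [← h.tsum_eq]
  exact tsum_congr fun n => by ring

/-- The Fourier expansion of the second Bernoulli polynomial. -/
lemma hasSum_cos_div_sq {u : ℝ} (hu : u ∈ Icc (0 : ℝ) 1) :
    HasSum (fun n : ℕ => Real.cos (2 * π * ((n : ℝ) + 1) * u) / (((n : ℝ) + 1) ^ 2))
      (π ^ 2 * (u ^ 2 - u + 1 / 6)) := by
  have h := hasSum_one_div_nat_pow_mul_cos one_ne_zero hu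
  rw [← hasSum_nat_add_iff' 1] at h
  have hB := bernoulliFun_two u
  unfold bernoulliFun at hB
  convert! h using 1
  · ext n
    push_cast
    ring
  · simp only [mul_one]
    rw [hB]
    simp only [Finset.sum_range_one, Nat.cast_zero, Nat.factorial_two, Nat.cast_ofNat]
    ring

lemma hasSum_sq_sin_sub_sin {x y : ℝ} (hx : x ∈ Icc (0 : ℝ) 1) (hy : y ∈ Icc (0 : ℝ) 1) :
    HasSum (fun n : ℕ => (Real.sin (((n : ℝ) + 1) * π * x) - Real.sin (((n : ℝ) + 1) * π * y)) ^ 2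
        / (π ^ 2 * ((n : ℝ) + 1) ^ 2))
      ((|x - y| - (x - y) ^ 2) / 2) := by
  obtain ⟨hx0, hx1⟩ := hx
  obtain ⟨hy0, hy1⟩ := hy
  have habs : |x - y| ≤ 1 := abs_le.mpr ⟨by linarith, by linarith⟩
  have h0 := hasSum_cos_div_sq (u := 0) ⟨le_rfl, zero_le_one⟩
  have hX := hasSum_cos_div_sq (u := x) ⟨hx0, hx1⟩
  have hY := hasSum_cos_div_sq (u := y) ⟨hy0, hy1⟩
  have hD := hasSum_cos_div_sq (u := |x - y| / 2)
    ⟨by positivity, by linarith⟩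
  have hS := hasSum_cos_div_sq (u := (x + y) / 2) ⟨by linarith, by linarith⟩
  have h := (((h0.sub ((hX.add hY).div_const 2)).sub hD).add hS).div_const (π ^ 2)
  have hpi : π ≠ 0 := Real.pi_ne_zero
  convert! h using 1
  · ext n
    have hn : ((n : ℝ) + 1) ≠ 0 := by positivity
    have eX : Real.cos (2 * π * ((n : ℝ) + 1) * x)
        = 1 - 2 * Real.sin (((n : ℝ) + 1) * π * x) ^ 2 := by
      rw [show 2 * π * ((n : ℝ) + 1) * x = 2 * (((n : ℝ) + 1) * π * x) by ring, Real.cos_two_mul,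
        Real.cos_sq']
      ring
    have eY : Real.cos (2 * π * ((n : ℝ) + 1) * y)
        = 1 - 2 * Real.sin (((n : ℝ) + 1) * π * y) ^ 2 := by
      rw [show 2 * π * ((n : ℝ) + 1) * y = 2 * (((n : ℝ) + 1) * π * y) by ring, Real.cos_two_mul,
        Real.cos_sq']
      ring
    have eD : Real.cos (2 * π * ((n : ℝ) + 1) * (|x - y| / 2))
        = Real.cos (((n : ℝ) + 1) * π * x - ((n : ℝ) + 1) * π * y) := by
      rcases abs_choice (x - y) with h | h <;> rw [h]
      · congr 1; ring
      · rw [← Real.cos_neg]; congr 1; ring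
    have eS : Real.cos (2 * π * ((n : ℝ) + 1) * ((x + y) / 2))
        = Real.cos (((n : ℝ) + 1) * π * x + ((n : ℝ) + 1) * π * y) := by
      congr 1; ring
    rw [eX, eY, eD, eS, Real.cos_sub, Real.cos_add, mul_zero, Real.cos_zero]
    field_simp
    ring
  · field_simp
    linear_combination 6 * sq_abs (x - y)

lemma summable_exp_neg_sq {a : ℝ} (ha : 0 < a) :
    Summable fun n : ℕ => Real.exp (-a * ((n : ℝ) + 1) ^ 2) := by
  have h : Summable fun n : ℕ => Real.exp (n * (-a)) :=
    Real.summable_exp_nat_mul_iff.mpr (by linarith)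
  refine Summable.of_nonneg_of_le (fun n => (Real.exp_pos _).le) (fun n => ?_) h
  have hn : (0 : ℝ) ≤ n := Nat.cast_nonneg n
  exact Real.exp_le_exp.mpr 
    (by nlinarith [mul_nonneg ha.le hn, mul_nonneg ha.le (sq_nonneg (n : ℝ))])

lemma integral_sq_kernel_sub (x y : ℝ) {r : ℝ} (hr : 0 < r) :
    ∫ z in Icc (0 : ℝ) 1, (G r x z - G r y z) ^ 2
      = ∑' n : ℕ, 2 * (Real.sin (((n : ℝ) + 1) * π * x) - Real.sin (((n : ℝ) + 1) * π * y)) ^ 2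
          * Real.exp (-(2 * π ^ 2 * ((n : ℝ) + 1) ^ 2) * r) := by
  have hE : Summable fun n : ℕ => Real.exp (-(π ^ 2) * ((n : ℝ) + 1) ^ 2 * r) := by
    refine (summable_exp_neg_sq (a := π ^ 2 * r) (by positivity)).congr fun n => ?_
    congr 1; ring
  have hterm : ∀ w z : ℝ, Summable fun n : ℕ => 2 * Real.exp (-(π ^ 2) * ((n : ℝ) + 1) ^ 2 * r)
      * Real.sin (((n : ℝ) + 1) * π * w) * Real.sin (((n : ℝ) + 1) * π * z) := by
    intro w z
    refine Summable.of_norm_bounded (hE.mul_left 2) fun n => ?_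
    rw [norm_mul, norm_mul, Real.norm_of_nonneg (by positivity), mul_assoc]
    exact mul_le_of_le_one_right (by positivity)
      (mul_le_one₀ (Real.abs_sin_le_one _) (norm_nonneg _) (Real.abs_sin_le_one _))
  set c : ℕ → ℝ := fun n => 2 * Real.exp (-(π ^ 2) * ((n : ℝ) + 1) ^ 2 * r)
    * (Real.sin (((n : ℝ) + 1) * π * x) - Real.sin (((n : ℝ) + 1) * π * y)) with hc_def
  have hc : Summable fun n => |c n| := by
    refine Summable.of_nonneg_of_le (fun n => abs_nonneg _) (fun n => ?_) (hE.mul_left 4)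
    have hs := abs_le.mp (Real.abs_sin_le_one (((n : ℝ) + 1) * π * x))
    have ht := abs_le.mp (Real.abs_sin_le_one (((n : ℝ) + 1) * π * y))
    have hd : |Real.sin (((n : ℝ) + 1) * π * x) - Real.sin (((n : ℝ) + 1) * π * y)| ≤ 2 :=
      abs_le.mpr ⟨by linarith [hs.1, ht.2], by linarith [hs.2, ht.1]⟩
    rw [hc_def, abs_mul, abs_of_nonneg (by positivity)]
    nlinarith [Real.exp_pos (-(π ^ 2) * ((n : ℝ) + 1) ^ 2 * r)]
  have hG : ∀ z, G r x z - G r y z = ∑' n, c n * Real.sin (((n : ℝ) + 1) * π * z) := by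
    intro z
    rw [G, G, if_pos hr, if_pos hr, ← (hterm x z).tsum_sub (hterm y z)]
    exact tsum_congr fun n => by rw [hc_def]; ring
  simp_rw [hG]
  rw [integral_sq_sine_series hc]
  refine tsum_congr fun n => ?_
  have he : Real.exp (-(2 * π ^ 2 * ((n : ℝ) + 1) ^ 2) * r)
      = Real.exp (-(π ^ 2) * ((n : ℝ) + 1) ^ 2 * r) ^ 2 := by
    rw [← Real.exp_nat_mul]; congr 1; push_cast; ring
  rw [he, hc_def]
  ring

lemma integral_integral_sq_kernel_sub {x y : ℝ} (hx : x ∈ Icc (0 : ℝ) 1) (hy : y ∈ Icc (0 : ℝ) 1) :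
    (∫ r in Ioi (0 : ℝ), ∫ z in Icc (0 : ℝ) 1, (G r x z - G r y z) ^ 2)
      = (|x - y| - (x - y) ^ 2) / 2 := by
  rw [setIntegral_congr_fun measurableSet_Ioi fun r hr => integral_sq_kernel_sub x y hr]
  have hsum := hasSum_sq_sin_sub_sin hx hy
  have hneg : ∀ n : ℕ, -(2 * π ^ 2 * ((n : ℝ) + 1) ^ 2) < 0 := fun n => by
    have := Real.pi_pos
    exact neg_lt_zero.mpr (by positivity)
  have hval : ∀ n : ℕ, ∫ r in Ioi (0 : ℝ),
      2 * (Real.sin (((n : ℝ) + 1) * π * x) - Real.sin (((n : ℝ) + 1) * π * y)) ^ 2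
          * Real.exp (-(2 * π ^ 2 * ((n : ℝ) + 1) ^ 2) * r)
      = (Real.sin (((n : ℝ) + 1) * π * x) - Real.sin (((n : ℝ) + 1) * π * y)) ^ 2
        / (π ^ 2 * ((n : ℝ) + 1) ^ 2) := by
    intro n
    have hn : ((n : ℝ) + 1) ≠ 0 := by positivity
    have hpi : π ≠ 0 := Real.pi_ne_zero
    rw [integral_const_mul, integral_exp_mul_Ioi (hneg n)]
    simp only [mul_zero, Real.exp_zero]
    field_simp
  have hnn : ∀ (n : ℕ) (r : ℝ),
      0 ≤ 2 * (Real.sin (((n : ℝ) + 1) * π * x) - Real.sin (((n : ℝ) + 1) * π * y)) ^ 2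
          * Real.exp (-(2 * π ^ 2 * ((n : ℝ) + 1) ^ 2) * r) := fun n r => by positivity
  have h := hasSum_integral_of_summable_integral_norm (μ := volume.restrict (Ioi (0 : ℝ)))
    (F := fun (n : ℕ) (r : ℝ) =>
      2 * (Real.sin (((n : ℝ) + 1) * π * x) - Real.sin (((n : ℝ) + 1) * π * y)) ^ 2
          * Real.exp (-(2 * π ^ 2 * ((n : ℝ) + 1) ^ 2) * r))
    (fun n => (integrableOn_exp_mul_Ioi (hneg n) 0).const_mul _)
    (by simp_rw [Real.norm_of_nonneg (hnn _ _), hval]; exact hsum.summable)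
  simp_rw [hval] at h
  exact h.unique hsum

/-- There is `C > 0` such that for all `x, y ∈ [0,1]`,
`∫₀^∞ ∫₀¹ (G_r(x,z) − G_r(y,z))² dz dr ≤ C |x−y|`. -/
theorem kernel_L2_space_modulus :
    ∃ C : ℝ, 0 < C ∧ ∀ x y : ℝ, x ∈ Set.Icc (0 : ℝ) 1 → y ∈ Set.Icc (0 : ℝ) 1 →
      (∫ r in Set.Ioi (0 : ℝ), ∫ z in Set.Icc (0 : ℝ) 1, (G r x z - G r y z) ^ 2)
        ≤ C * |x - y| := by
  refine ⟨1 / 2, by norm_num, fun x y hx hy => ?_⟩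
  rw [integral_integral_sq_kernel_sub hx hy]
  nlinarith [sq_nonneg (x - y)]
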